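/- arXiv:2301.11795 — 7 statements merged into one kernel-verified Lean document; each statement's English description precedes it below -/
import Mathlib

section
/- Let 2 ≤ p < ∞. Then for every ξ, η ∈ ℝⁿ it holds that ⟨H_{p−1}(ξ) − H_{p−1}(η), ξ − η⟩ ≥ (4/p²) |H_{p/2}(ξ) − H_{p/2}(η)|². -/
open scoped RealInnerProductSpace

/-- `Hmap lam ξ = (|ξ| − 1)₊^lam • ξ/|ξ|` for `ξ ≠ 0`, and `Hmap lam 0 = 0`. -/
noncomputable def Hmap {n : ℕ} (lam : ℝ) (ξ : EuclideanSpace ℝ (Fin n)) :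
    EuclideanSpace ℝ (Fin n) :=
  open Classical in
  if ξ = (0 : EuclideanSpace ℝ (Fin n)) then 0
  else (max (‖ξ‖ - 1) 0) ^ lam • ‖ξ‖⁻¹ • ξ

lemma aux_pow {a q : ℝ} (ha : 0 ≤ a) (hq : 1 ≤ q) : a ^ q = a ^ (q - 1) * a := by
  rcases ha.eq_or_lt with h | h
  · subst h; rw [Real.zero_rpow (by linarith)]; simp
  · rw [Real.rpow_sub_one h.ne']; field_simp

lemma aux_pow2 {a q : ℝ} (ha : 0 ≤ a) (hq : 1 ≤ q) :
    a ^ (2 * q - 1) = (a ^ (q - 1)) ^ 2 * a := by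
  rw [aux_pow ha (by linarith), ← Real.rpow_natCast (a ^ (q - 1)) 2, ← Real.rpow_mul ha]
  congr 2; push_cast; ring

lemma aux_bern {a b q : ℝ} (hb : 0 ≤ b) (hab : b ≤ a) (hq : 1 ≤ q) :
    a ^ (q - 1) * a - b ^ (q - 1) * b ≤ q * a ^ (q - 1) * (a - b) := by
  rcases (hb.trans hab).eq_or_lt with h | h
  · have : b = 0 := by linarith
    subst this; subst h; simp
  · have hs : (-1 : ℝ) ≤ b / a - 1 := by have := div_nonneg hb h.le; linarith
    have h1 := one_add_mul_self_le_rpow_one_add hs hq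
    rw [show 1 + (b / a - 1) = b / a by ring, Real.div_rpow hb h.le, le_div_iff₀ (by positivity),
      aux_pow hb hq, aux_pow h.le hq] at h1
    have : (1 + q * (b / a - 1)) * (a ^ (q - 1) * a)
      = a ^ (q - 1) * a + q * a ^ (q - 1) * (b - a) := by field_simp
    linarith

lemma aux_one {a b q : ℝ} (hb : 0 ≤ b) (hab : b ≤ a) (hq : 1 ≤ q) :
    (a ^ (q - 1) * a - b ^ (q - 1) * b) ^ 2 ≤
      q ^ 2 * (((a ^ (q - 1)) ^ 2 * a - (b ^ (q - 1)) ^ 2 * b) * (a - b)) := by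
  have h1 := aux_bern hb hab hq
  have hAB : b ^ (q - 1) ≤ a ^ (q - 1) := Real.rpow_le_rpow hb hab (by linarith)
  have hB : 0 ≤ b ^ (q - 1) := Real.rpow_nonneg hb _
  generalize a ^ (q - 1) = A at *
  generalize b ^ (q - 1) = B at *
  have hA := hB.trans hAB
  have ha := hb.trans hab
  have h0 : 0 ≤ A * a - B * b := sub_nonneg.2 (mul_le_mul hAB hab hb hA)
  have h2 : A * (A * a - B * b) ≤ A ^ 2 * a - B ^ 2 * b := by
    nlinarith [mul_nonneg (mul_nonneg hB hb) (sub_nonneg.2 hAB)]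
  have h3 : 0 ≤ A * (A * a - B * b) := mul_nonneg hA h0
  have hd : 0 ≤ a - b := sub_nonneg.2 hab
  calc (A * a - B * b) ^ 2 = (A * a - B * b) * (A * a - B * b) := by ring
    _ ≤ (q * A * (a - b)) * (A * a - B * b) := mul_le_mul_of_nonneg_right h1 h0
    _ = q * ((A * (A * a - B * b)) * (a - b)) := by ring
    _ ≤ q ^ 2 * ((A * (A * a - B * b)) * (a - b)) :=
        mul_le_mul_of_nonneg_right (by nlinarith) (mul_nonneg h3 hd)
    _ ≤ _ := by gcongr

lemma aux_plus {r s q : ℝ} (hsr : s ≤ r) (hq : 1 ≤ q) {a b : ℝ}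
    (ha : a = max (r - 1) 0) (hb : b = max (s - 1) 0) :
    (a ^ (q - 1) * a - b ^ (q - 1) * b) ^ 2 ≤
      q ^ 2 * (((a ^ (q - 1)) ^ 2 * a - (b ^ (q - 1)) ^ 2 * b) * (r - s)) := by
  have hb0 : 0 ≤ b := hb ▸ le_max_right _ _
  have hab : b ≤ a := by rw [ha, hb]; exact max_le_max (by linarith) le_rfl
  have hl : a - b ≤ r - s := by
    rw [ha, hb]
    rcases max_cases (r - 1) 0 with h | h <;> rcases max_cases (s - 1) 0 with h' | h' <;> linarith
  refine (aux_one hb0 hab hq).trans ?_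
  have hAB : b ^ (q - 1) ≤ a ^ (q - 1) := Real.rpow_le_rpow hb0 hab (by linarith)
  have hB : 0 ≤ b ^ (q - 1) := Real.rpow_nonneg hb0 _
  have : 0 ≤ (a ^ (q - 1)) ^ 2 * a - (b ^ (q - 1)) ^ 2 * b :=
    sub_nonneg.2 (by gcongr)
  gcongr

lemma aux_plus' {r s q : ℝ} (hq : 1 ≤ q) {a b : ℝ}
    (ha : a = max (r - 1) 0) (hb : b = max (s - 1) 0) :
    (a ^ (q - 1) * a - b ^ (q - 1) * b) ^ 2 ≤
      q ^ 2 * (((a ^ (q - 1)) ^ 2 * a - (b ^ (q - 1)) ^ 2 * b) * (r - s)) := by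
  rcases le_total s r with h | h
  · exact aux_plus h hq ha hb
  · have := aux_plus h hq hb ha
    linarith

lemma aux_minus {r s q a b A B : ℝ} (hq : 1 ≤ q) (hA : 0 ≤ A) (hB : 0 ≤ B)
    (ha : 0 ≤ a) (hb : 0 ≤ b) (har : a ≤ r) (hbs : b ≤ s) :
    (A * a + B * b) ^ 2 ≤ q ^ 2 * ((A ^ 2 * a + B ^ 2 * b) * (r + s)) := by
  have h1 : (A * a + B * b) ^ 2 ≤ (A ^ 2 * a + B ^ 2 * b) * (a + b) := by
    nlinarith [mul_nonneg (mul_nonneg ha hb) (sq_nonneg (A - B))]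
  have h2 : (A ^ 2 * a + B ^ 2 * b) * (a + b) ≤ (A ^ 2 * a + B ^ 2 * b) * (r + s) := by gcongr
  have h3 : 0 ≤ (A ^ 2 * a + B ^ 2 * b) * (a + b) := by positivity
  nlinarith [mul_nonneg (show 0 ≤ q ^ 2 - 1 by nlinarith) (h3.trans h2)]

lemma Hmap_eq {n : ℕ} (lam : ℝ) (ξ : EuclideanSpace ℝ (Fin n)) :
    Hmap lam ξ = (max (‖ξ‖ - 1) 0) ^ lam • ‖ξ‖⁻¹ • ξ := by
  unfold Hmap
  split_ifs with h
  · simp [h]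
  · rfl

lemma aux_unit {n : ℕ} (ξ : EuclideanSpace ℝ (Fin n)) :
    ∃ u : EuclideanSpace ℝ (Fin n), ‖ξ‖⁻¹ • ξ = u ∧ ξ = ‖ξ‖ • u ∧ ‖u‖ ≤ 1 ∧
      ‖ξ‖ * ‖u‖ ^ 2 = ‖ξ‖ ∧ max (‖ξ‖ - 1) 0 * ‖u‖ ^ 2 = max (‖ξ‖ - 1) 0 := by
  refine ⟨_, rfl, ?_⟩
  by_cases h : ξ = 0
  · subst h; simp
  · have h' : ‖ξ‖ ≠ 0 := norm_ne_zero_iff.2 h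
    have h1 : ‖‖ξ‖⁻¹ • ξ‖ = 1 := by rw [norm_smul, norm_inv, norm_norm, inv_mul_cancel₀ h']
    rw [h1, smul_smul, mul_inv_cancel₀ h']
    simp

/-- for `2 ≤ p`,
`⟨H_{p−1}(ξ) − H_{p−1}(η), ξ − η⟩ ≥ (4/p²) ‖H_{p/2}(ξ) − H_{p/2}(η)‖²`. -/
theorem monotonicity_of_Hmap {n : ℕ} (p : ℝ) (hp : 2 ≤ p)
    (ξ η : EuclideanSpace ℝ (Fin n)) :
    ⟪Hmap (p - 1) ξ - Hmap (p - 1) η, ξ - η⟫ ≥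
      4 / p ^ 2 * ‖Hmap (p / 2) ξ - Hmap (p / 2) η‖ ^ 2 := by
  obtain ⟨q, rfl⟩ : ∃ q, p = 2 * q := ⟨p / 2, by ring⟩
  have hq : 1 ≤ q := by linarith
  obtain ⟨u, hu, hξ, hu1, hur, hua⟩ := aux_unit ξ
  obtain ⟨v, hv, hη, hv1, hvs, hvb⟩ := aux_unit η
  rw [Hmap_eq, Hmap_eq, Hmap_eq, Hmap_eq, hu, hv, show 2 * q / 2 = q by ring]
  have hr := norm_nonneg ξ
  have hs := norm_nonneg η
  generalize ‖ξ‖ = r at *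
  generalize ‖η‖ = s at *
  subst hξ hη
  clear hu hv
  obtain ⟨a, ha⟩ : ∃ a, a = max (r - 1) 0 := ⟨_, rfl⟩
  obtain ⟨b, hb⟩ : ∃ b, b = max (s - 1) 0 := ⟨_, rfl⟩
  have hP := aux_plus' hq ha hb
  rw [← ha] at hua ⊢
  rw [← hb] at hvb ⊢
  have ha0 : 0 ≤ a := ha ▸ le_max_right _ _
  have hb0 : 0 ≤ b := hb ▸ le_max_right _ _
  have har : a ≤ r := by rw [ha]; exact max_le (by linarith) hr
  have hbs : b ≤ s := by rw [hb]; exact max_le (by linarith) hs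
  rw [aux_pow2 ha0 hq, aux_pow2 hb0 hq, aux_pow ha0 hq, aux_pow hb0 hq]
  have hA : 0 ≤ a ^ (q - 1) := Real.rpow_nonneg ha0 _
  have hB : 0 ≤ b ^ (q - 1) := Real.rpow_nonneg hb0 _
  have hM := aux_minus hq hA hB ha0 hb0 har hbs
  generalize a ^ (q - 1) = A at *
  generalize b ^ (q - 1) = B at *
  have hc : |⟪u, v⟫| ≤ 1 := (abs_real_inner_le_norm u v).trans
    (mul_le_one₀ hu1 (norm_nonneg _) hv1)
  obtain ⟨hc1, hc2⟩ := abs_le.1 hc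
  have hL : ⟪(A ^ 2 * a) • u - (B ^ 2 * b) • v, r • u - s • v⟫
      = A ^ 2 * a * r + B ^ 2 * b * s - ⟪u, v⟫ * (A ^ 2 * a * s + B ^ 2 * b * r) := by
    simp only [inner_sub_left, inner_sub_right, real_inner_smul_left, real_inner_smul_right,
      real_inner_self_eq_norm_sq, real_inner_comm u v]
    linear_combination A ^ 2 * a * hur + B ^ 2 * b * hvs
  have hR : ‖(A * a) • u - (B * b) • v‖ ^ 2
      = (A * a) ^ 2 + (B * b) ^ 2 - 2 * ⟪u, v⟫ * (A * a) * (B * b) := by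
    rw [← real_inner_self_eq_norm_sq]
    simp only [inner_sub_left, inner_sub_right, real_inner_smul_left, real_inner_smul_right,
      real_inner_comm u v]
    rw [real_inner_self_eq_norm_sq, real_inner_self_eq_norm_sq]
    linear_combination A ^ 2 * a * hua + B ^ 2 * b * hvb
  rw [hL, hR, show 4 / (2 * q) ^ 2 = 1 / q ^ 2 by field_simp; norm_num, ge_iff_le, one_div,
    inv_mul_le_iff₀ (by positivity)]
  generalize ⟪u, v⟫ = c at *
  have hc3 : 0 ≤ (1 + c) / 2 := by linarith
  have hc4 : 0 ≤ (1 - c) / 2 := by linarith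
  have h1 := mul_le_mul_of_nonneg_left hP hc3
  have h2 := mul_le_mul_of_nonneg_left hM hc4
  linear_combination h1 + h2
end

section
/- Let 2 ≤ p < ∞. Then for every ξ, η ∈ ℝⁿ it holds that |H_{p−1}(ξ) − H_{p−1}(η)| ≤ (p−1) ( |H_{p/2}(ξ)|^{(p−2)/p} + |H_{p/2}(η)|^{(p−2)/p} ) |H_{p/2}(ξ) − H_{p/2}(η)|. -/
lemma Hmap_eq_aux {n : ℕ} (p : ℝ) (hp : 2 ≤ p) (ξ : EuclideanSpace ℝ (Fin n)) :
    Hmap (p - 1) ξ = (‖Hmap (p / 2) ξ‖ ^ ((p - 2) / p)) • Hmap (p / 2) ξ := by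
  unfold Hmap
  split_ifs with h
  · simp
  · have hn : ‖ξ‖ ≠ 0 := norm_ne_zero_iff.mpr h
    have ha : 0 ≤ max (‖ξ‖ - 1) 0 := le_max_right _ _
    generalize max (‖ξ‖ - 1) 0 = a at ha
    have hA : 0 ≤ a ^ (p / 2) := Real.rpow_nonneg ha _
    have h1 : ‖a ^ (p / 2) • ‖ξ‖⁻¹ • ξ‖ = a ^ (p / 2) := by
      rw [norm_smul, norm_smul, norm_inv, norm_norm, inv_mul_cancel₀ hn, mul_one,
        Real.norm_of_nonneg hA]
    rw [h1, ← Real.rpow_mul ha]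
    have h2 : p / 2 * ((p - 2) / p) = (p - 2) / 2 := by
      have : p ≠ 0 := by linarith
      field_simp
    have h3 : a ^ (p - 1) = a ^ ((p - 2) / 2) * a ^ (p / 2) := by
      have h4 : (p - 2) / 2 + p / 2 = p - 1 := by ring
      rw [← Real.rpow_add' ha (by rw [h4]; linarith), h4]
    rw [h2, h3, mul_smul]

lemma power_diff_aux {E : Type*} [NormedAddCommGroup E] [NormedSpace ℝ E] (t : ℝ) (h0 : 0 ≤ t)
    (h1 : t ≤ 1) (X Y : E) (h : ‖Y‖ ≤ ‖X‖) :
    ‖(‖X‖ ^ t) • X - (‖Y‖ ^ t) • Y‖ ≤ (‖X‖ ^ t + ‖Y‖ ^ t) * ‖X - Y‖ := by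
  have hy := norm_nonneg Y
  have hx := norm_nonneg X
  have e : (‖X‖ ^ t) • X - (‖Y‖ ^ t) • Y
      = (‖X‖ ^ t) • (X - Y) + (‖X‖ ^ t - ‖Y‖ ^ t) • Y := by
    module
  have hxt : 0 ≤ ‖X‖ ^ t := Real.rpow_nonneg hx _
  have hyt : 0 ≤ ‖Y‖ ^ t := Real.rpow_nonneg hy _
  have hm : ‖Y‖ ^ t ≤ ‖X‖ ^ t := Real.rpow_le_rpow hy h h0
  have hm' : ‖Y‖ ^ (1 - t) ≤ ‖X‖ ^ (1 - t) := Real.rpow_le_rpow hy h (by linarith)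
  have ey : ‖Y‖ ^ (1 - t) * ‖Y‖ ^ t = ‖Y‖ := by
    rw [← Real.rpow_add' hy (by norm_num)]; simp
  have ex : ‖X‖ ^ (1 - t) * ‖X‖ ^ t = ‖X‖ := by
    rw [← Real.rpow_add' hx (by norm_num)]; simp
  have key : ‖X‖ ^ t * ‖Y‖ ≤ ‖Y‖ ^ t * ‖X‖ := by
    have := mul_le_mul_of_nonneg_right hm' (mul_nonneg hxt hyt)
    calc ‖X‖ ^ t * ‖Y‖ = ‖Y‖ ^ (1 - t) * (‖X‖ ^ t * ‖Y‖ ^ t) := by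
          conv_lhs => rw [← ey]
          ring
      _ ≤ ‖X‖ ^ (1 - t) * (‖X‖ ^ t * ‖Y‖ ^ t) := this
      _ = ‖Y‖ ^ t * ‖X‖ := by
          conv_rhs => rw [← ex]
          ring
  have tri : ‖X‖ - ‖Y‖ ≤ ‖X - Y‖ := norm_sub_norm_le X Y
  rw [e]
  refine (norm_add_le _ _).trans ?_
  rw [norm_smul, norm_smul, Real.norm_of_nonneg hxt, Real.norm_of_nonneg (sub_nonneg.mpr hm)]
  nlinarith [mul_le_mul_of_nonneg_left tri hyt]

/-- for `2 ≤ p`,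
`|H_{p−1}(ξ) − H_{p−1}(η)| ≤ (p−1)(|H_{p/2}(ξ)|^{(p−2)/p} + |H_{p/2}(η)|^{(p−2)/p}) |H_{p/2}(ξ) − H_{p/2}(η)|`. -/
theorem lipschitz_estimate_for_Hmap {n : ℕ} (p : ℝ) (hp : 2 ≤ p)
    (ξ η : EuclideanSpace ℝ (Fin n)) :
    ‖Hmap (p - 1) ξ - Hmap (p - 1) η‖ ≤
      (p - 1) * (‖Hmap (p / 2) ξ‖ ^ ((p - 2) / p) + ‖Hmap (p / 2) η‖ ^ ((p - 2) / p)) *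
        ‖Hmap (p / 2) ξ - Hmap (p / 2) η‖ := by
  rw [Hmap_eq_aux p hp ξ, Hmap_eq_aux p hp η]
  generalize Hmap (p / 2) ξ = X
  generalize Hmap (p / 2) η = Y
  have ht0 : 0 ≤ (p - 2) / p := div_nonneg (by linarith) (by linarith)
  have ht1 : (p - 2) / p ≤ 1 := by
    rw [div_le_one (by linarith)]; linarith
  generalize (p - 2) / p = t at ht0 ht1
  have main : ‖(‖X‖ ^ t) • X - (‖Y‖ ^ t) • Y‖ ≤ (‖X‖ ^ t + ‖Y‖ ^ t) * ‖X - Y‖ := by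
    rcases le_total ‖Y‖ ‖X‖ with h | h
    · exact power_diff_aux t ht0 ht1 X Y h
    · have := power_diff_aux t ht0 ht1 Y X h
      rwa [norm_sub_rev, norm_sub_rev Y X, add_comm] at this
  refine main.trans ?_
  rw [mul_assoc]
  exact le_mul_of_one_le_left (by positivity) (by linarith)
end

section
/- Let p ≥ 2 and δ ∈ (0,1). Then there exists a constant c_p > 0, depending only on p, such that for every ξ, η ∈ ℝⁿ: |𝒢_δ((|ξ| − δ − 1)_+) − 𝒢_δ((|η| − δ − 1)_+)|² ≤ c_p |H_{p/2}(ξ) − H_{p/2}(η)|². -/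
/-- `Gfun p δ t = ∫₀ᵗ s(s+δ)^{(p−2)/2}/√(1+δ+s²) ds`. -/
noncomputable def Gfun (p δ t : ℝ) : ℝ :=
  ∫ s in (0:ℝ)..t, s * (s + δ) ^ ((p - 2) / 2) / Real.sqrt (1 + δ + s ^ 2)

lemma Gfun_sub_bounds (p δ x y : ℝ) (hp : 2 ≤ p) (hδ : 0 < δ) (hx : 0 ≤ x) (hxy : x ≤ y) :
    |Gfun p δ y - Gfun p δ x| ≤ (y + δ) ^ (p / 2) - (x + δ) ^ (p / 2) := by
  have hr : 0 ≤ (p - 2) / 2 := by linarith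
  have hc1 : Continuous fun s : ℝ => (s + δ) ^ ((p - 2) / 2) :=
    (continuous_id.add continuous_const).rpow_const (fun _ => Or.inr hr)
  have hc2 : Continuous fun s : ℝ =>
      s * (s + δ) ^ ((p - 2) / 2) / Real.sqrt (1 + δ + s ^ 2) := by
    refine (continuous_id.mul hc1).div (by fun_prop) (fun s => ?_)
    have : 0 < 1 + δ + s ^ 2 := by positivity
    exact (Real.sqrt_pos.2 this).ne'
  have e1 : Gfun p δ y - Gfun p δ x =
      ∫ s in x..y, s * (s + δ) ^ ((p - 2) / 2) / Real.sqrt (1 + δ + s ^ 2) := by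
    unfold Gfun
    exact intervalIntegral.integral_interval_sub_left
      (hc2.intervalIntegrable _ _) (hc2.intervalIntegrable _ _)
  have h0 : 0 ≤ ∫ s in x..y, s * (s + δ) ^ ((p - 2) / 2) / Real.sqrt (1 + δ + s ^ 2) := by
    apply intervalIntegral.integral_nonneg hxy
    intro s hs
    have : 0 ≤ s := hx.trans hs.1
    positivity
  have h1 : (∫ s in x..y, s * (s + δ) ^ ((p - 2) / 2) / Real.sqrt (1 + δ + s ^ 2)) ≤
      ∫ s in x..y, (s + δ) ^ ((p - 2) / 2) := by
    apply intervalIntegral.integral_mono_on hxy (hc2.intervalIntegrable _ _)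
      (hc1.intervalIntegrable _ _)
    intro s hs
    have hs0 : 0 ≤ s := hx.trans hs.1
    have hpos : 0 < Real.sqrt (1 + δ + s ^ 2) := Real.sqrt_pos.2 (by positivity)
    rw [div_le_iff₀ hpos, mul_comm]
    apply mul_le_mul_of_nonneg_left _ (by positivity)
    apply Real.le_sqrt_of_sq_le
    linarith
  have h2 : (∫ s in x..y, (s + δ) ^ ((p - 2) / 2)) =
      ((y + δ) ^ (p / 2) - (x + δ) ^ (p / 2)) / (p / 2) := by
    rw [intervalIntegral.integral_comp_add_right (fun u : ℝ => u ^ ((p - 2) / 2)),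
      integral_rpow (Or.inl (by linarith))]
    have : (p - 2) / 2 + 1 = p / 2 := by ring
    rw [this]
  have h3 : (x + δ) ^ (p / 2) ≤ (y + δ) ^ (p / 2) :=
    Real.rpow_le_rpow (by linarith) (by linarith) (by linarith)
  rw [e1, abs_of_nonneg h0]
  refine h1.trans ?_
  rw [h2]
  exact div_le_self (by linarith) (by linarith)

lemma Hmap_norm {n : ℕ} (q : ℝ) (hq : 0 < q) (ξ : EuclideanSpace ℝ (Fin n)) :
    ‖Hmap q ξ‖ = (max (‖ξ‖ - 1) 0) ^ q := by
  unfold Hmap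
  split_ifs with h
  · subst h
    simp [Real.zero_rpow hq.ne']
  · have h' : ‖ξ‖ ≠ 0 := norm_ne_zero_iff.2 h
    have h2 : 0 ≤ (max (‖ξ‖ - 1) 0) ^ q := Real.rpow_nonneg (le_max_right _ _) _
    rw [norm_smul, norm_smul, norm_inv, norm_norm, inv_mul_cancel₀ h', mul_one,
      Real.norm_of_nonneg h2]

lemma Gfun_le_Hmap_aux (p δ : ℝ) (hp : 2 ≤ p) (hδ : 0 < δ) {n : ℕ}
    (ξ η : EuclideanSpace ℝ (Fin n)) (h : ‖η‖ ≤ ‖ξ‖) :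
    |Gfun p δ (max (‖ξ‖ - δ - 1) 0) - Gfun p δ (max (‖η‖ - δ - 1) 0)| ≤
      ‖Hmap (p / 2) ξ - Hmap (p / 2) η‖ := by
  have hq : 0 < p / 2 := by linarith
  refine (Gfun_sub_bounds p δ _ _ hp hδ (le_max_right _ _)
    (max_le_max (by linarith) le_rfl)).trans ?_
  refine le_trans ?_ (norm_sub_norm_le _ _)
  rw [Hmap_norm _ hq, Hmap_norm _ hq]
  have mono : ∀ u v : ℝ, 0 ≤ u → u ≤ v → u ^ (p / 2) ≤ v ^ (p / 2) :=
    fun u v hu huv => Real.rpow_le_rpow hu huv hq.le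
  have hb := mono (max (‖η‖ - 1) 0) (max (‖η‖ - δ - 1) 0 + δ) (le_max_right _ _)
    (max_le (by linarith [le_max_left (‖η‖ - δ - 1) 0])
      (by linarith [le_max_right (‖η‖ - δ - 1) 0]))
  rcases le_total (‖ξ‖ - δ - 1) 0 with h1 | h1
  · rw [max_eq_right h1, max_eq_right (by linarith : ‖η‖ - δ - 1 ≤ 0), sub_self]
    exact sub_nonneg.2 (mono _ _ (le_max_right _ _) (max_le_max (by linarith) le_rfl))
  · have e : max (‖ξ‖ - δ - 1) 0 + δ = max (‖ξ‖ - 1) 0 := by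
      rw [max_eq_left h1, max_eq_left (by linarith : 0 ≤ ‖ξ‖ - 1)]
      ring
    rw [e]
    linarith

/-- for `p ≥ 2` there is `c_p > 0`, depending only on `p`, such that for all
`δ ∈ (0,1)` and all `ξ, η ∈ ℝⁿ`:
`|𝒢_δ((|ξ|−δ−1)₊) − 𝒢_δ((|η|−δ−1)₊)|² ≤ c_p |H_{p/2}(ξ) − H_{p/2}(η)|²`. -/
theorem Gfun_controlled_by_Hmap (p : ℝ) (hp : 2 ≤ p) :
    ∃ c : ℝ, 0 < c ∧ ∀ δ : ℝ, 0 < δ → δ < 1 →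
      ∀ (n : ℕ) (ξ η : EuclideanSpace ℝ (Fin n)),
        |Gfun p δ (max (‖ξ‖ - δ - 1) 0) - Gfun p δ (max (‖η‖ - δ - 1) 0)| ^ 2 ≤
          c * ‖Hmap (p / 2) ξ - Hmap (p / 2) η‖ ^ 2 := by

  refine ⟨1, one_pos, fun δ hδ _ n ξ η => ?_⟩
  rw [one_mul]
  apply pow_le_pow_left₀ (abs_nonneg _)
  rcases le_total ‖η‖ ‖ξ‖ with h | h
  · exact Gfun_le_Hmap_aux p δ hp hδ ξ η h
  · rw [abs_sub_comm, norm_sub_rev]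
    exact Gfun_le_Hmap_aux p δ hp hδ η ξ h
end

section
/- Let p ≥ 2, δ ∈ (0,1), and let ξ, η ∈ ℝⁿ with |ξ| > 1 + δ and |η| ≤ |ξ|. Then 𝒢_δ(|ξ| − 1 − δ) − 𝒢_δ((|η| − 1 − δ)_+) ≤ (2/p) [ (|ξ| − 1)^{p/2} − ( (|η| − δ − 1)_+ + δ )^{p/2} ]. -/
/-- for `p ≥ 2`, `δ ∈ (0,1)` and `ξ, η ∈ ℝⁿ` with `|ξ| > 1+δ`, `|η| ≤ |ξ|`:
`𝒢_δ(|ξ|−1−δ) − 𝒢_δ((|η|−1−δ)₊) ≤ (2/p)[(|ξ|−1)^{p/2} − ((|η|−δ−1)₊+δ)^{p/2}]`. -/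
theorem Gfun_difference_bound {n : ℕ} (p : ℝ) (hp : 2 ≤ p)
    (δ : ℝ) (hδ0 : 0 < δ) (hδ1 : δ < 1)
    (ξ η : EuclideanSpace ℝ (Fin n)) (hξ : 1 + δ < ‖ξ‖) (hη : ‖η‖ ≤ ‖ξ‖) :
    Gfun p δ (‖ξ‖ - 1 - δ) - Gfun p δ (max (‖η‖ - 1 - δ) 0) ≤
      2 / p * ((‖ξ‖ - 1) ^ (p / 2) - (max (‖η‖ - δ - 1) 0 + δ) ^ (p / 2)) := by
  have hr : 0 ≤ (p - 2) / 2 := by linarith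
  have e1 : ‖η‖ - δ - 1 = ‖η‖ - 1 - δ := by ring
  rw [e1]
  have hb0 : 0 ≤ max (‖η‖ - 1 - δ) 0 := le_max_right _ _
  have hba : max (‖η‖ - 1 - δ) 0 ≤ ‖ξ‖ - 1 - δ := max_le (by linarith) (by linarith)
  have e2 : ‖ξ‖ - 1 = (‖ξ‖ - 1 - δ) + δ := by ring
  rw [e2]
  generalize max (‖η‖ - 1 - δ) 0 = b at *
  have e3 : ‖ξ‖ - 1 - δ + δ - δ = ‖ξ‖ - 1 - δ := by ring
  rw [e3]
  generalize ‖ξ‖ - 1 - δ = a at *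
  have hc : Continuous fun s : ℝ => (s + δ) ^ ((p - 2) / 2) :=
    (continuous_id.add continuous_const).rpow_const (fun _ => Or.inr hr)
  have hf : Continuous fun s : ℝ => s * (s + δ) ^ ((p - 2) / 2) / Real.sqrt (1 + δ + s ^ 2) := by
    refine (continuous_id.mul hc).div (by fun_prop) (fun s => ?_)
    have : 0 < 1 + δ + s ^ 2 := by positivity
    exact (Real.sqrt_pos.2 this).ne'
  unfold Gfun
  rw [intervalIntegral.integral_interval_sub_left (hf.intervalIntegrable _ _)
    (hf.intervalIntegrable _ _)]
  have hI : ∫ s in b..a, (s + δ) ^ ((p - 2) / 2) =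
      2 / p * ((a + δ) ^ (p / 2) - (b + δ) ^ (p / 2)) := by
    rw [intervalIntegral.integral_comp_add_right (fun x : ℝ => x ^ ((p - 2) / 2)),
      integral_rpow (Or.inl (by linarith))]
    have : (p - 2) / 2 + 1 = p / 2 := by ring
    rw [this]
    have : p ≠ 0 := by linarith
    field_simp
  rw [← hI]
  refine intervalIntegral.integral_mono_on hba (hf.intervalIntegrable _ _)
    (hc.intervalIntegrable _ _) (fun s hs => ?_)
  have hs0 : 0 ≤ s := hb0.trans hs.1
  have hpos : 0 < 1 + δ + s ^ 2 := by positivity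
  rw [div_le_iff₀ (Real.sqrt_pos.2 hpos), mul_comm]
  refine mul_le_mul_of_nonneg_left (Real.le_sqrt_of_sq_le (by linarith)) ?_
  exact Real.rpow_nonneg (by linarith) _
end

section
/- Let p ≥ 2 and 0 < δ ≤ 1. Then there exist constants c_{p,δ} and c̃_{p,δ}, depending only on p and δ, with 0 < c_{p,δ} < 2/p, such that for all t ≥ 0: c_{p,δ} (t+δ)^{p/2} − c̃_{p,δ} ≤ 𝒢_δ(t) ≤ (2/p)(t+δ)^{p/2}. -/
theorem Gfun_aux_cont (p : ℝ) (hp : 2 ≤ p) (δ : ℝ) (hδ0 : 0 < δ) :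
    Continuous fun s : ℝ => s * (s + δ) ^ ((p - 2) / 2) / Real.sqrt (1 + δ + s ^ 2) := by
  have hc : Continuous fun s : ℝ => (s + δ) ^ ((p - 2) / 2) :=
    (continuous_id.add continuous_const).rpow_const (fun _ => Or.inr (by linarith))
  refine (continuous_id.mul hc).div (by fun_prop) (fun s => ?_)
  have : 0 < 1 + δ + s ^ 2 := by positivity
  positivity

theorem Gfun_aux_int (p : ℝ) (hp : 2 ≤ p) (δ a t : ℝ) :
    ∫ s in a..t, (s + δ) ^ ((p - 2) / 2) =
      2 / p * (t + δ) ^ (p / 2) - 2 / p * (a + δ) ^ (p / 2) := by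
  rw [intervalIntegral.integral_comp_add_right (fun x : ℝ => x ^ ((p - 2) / 2)),
    integral_rpow (Or.inl (by linarith))]
  have h : (p - 2) / 2 + 1 = p / 2 := by ring
  have : p ≠ 0 := by linarith
  rw [h]
  field_simp

/-- for `p ≥ 2` and `0 < δ ≤ 1` there are constants `c_{p,δ}` and `c̃_{p,δ}`,
with `0 < c_{p,δ} < 2/p`, such that for all `t ≥ 0`:
`c_{p,δ}(t+δ)^{p/2} − c̃_{p,δ} ≤ 𝒢_δ(t) ≤ (2/p)(t+δ)^{p/2}`. -/
theorem Gfun_two_sided_bounds (p : ℝ) (hp : 2 ≤ p) (δ : ℝ) (hδ0 : 0 < δ) (hδ1 : δ ≤ 1) :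
    ∃ c c' : ℝ, 0 < c ∧ c < 2 / p ∧ ∀ t : ℝ, 0 ≤ t →
      c * (t + δ) ^ (p / 2) - c' ≤ Gfun p δ t ∧
      Gfun p δ t ≤ 2 / p * (t + δ) ^ (p / 2) := by
  have hp0 : 0 < p := by linarith
  have hf := Gfun_aux_cont p hp δ hδ0
  have hg : Continuous fun s : ℝ => (s + δ) ^ ((p - 2) / 2) :=
    (continuous_id.add continuous_const).rpow_const (fun _ => Or.inr (by linarith))
  have hnn : ∀ s : ℝ, 0 ≤ s →
      0 ≤ s * (s + δ) ^ ((p - 2) / 2) / Real.sqrt (1 + δ + s ^ 2) := by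
    intro s hs
    positivity
  refine ⟨1 / p, 1 / p * (1 + δ) ^ (p / 2), by positivity, by gcongr; norm_num, ?_⟩
  intro t ht
  unfold Gfun
  constructor
  · rcases le_total t 1 with h1 | h1
    · have h2 : 0 ≤ ∫ s in (0:ℝ)..t, s * (s + δ) ^ ((p - 2) / 2) / Real.sqrt (1 + δ + s ^ 2) :=
        intervalIntegral.integral_nonneg ht (fun s hs => hnn s hs.1)
      have h3 : 1 / p * (t + δ) ^ (p / 2) ≤ 1 / p * (1 + δ) ^ (p / 2) := by gcongr
      linarith
    · rw [← intervalIntegral.integral_add_adjacent_intervals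
        (hf.intervalIntegrable 0 1) (hf.intervalIntegrable 1 t)]
      have h2 : 0 ≤ ∫ s in (0:ℝ)..1, s * (s + δ) ^ ((p - 2) / 2) / Real.sqrt (1 + δ + s ^ 2) :=
        intervalIntegral.integral_nonneg zero_le_one (fun s hs => hnn s hs.1)
      have h3 : ∫ s in (1:ℝ)..t, (1 / 2) * (s + δ) ^ ((p - 2) / 2) ≤
          ∫ s in (1:ℝ)..t, s * (s + δ) ^ ((p - 2) / 2) / Real.sqrt (1 + δ + s ^ 2) := by
        refine intervalIntegral.integral_mono_on h1
          ((hg.const_mul _).intervalIntegrable _ _) (hf.intervalIntegrable _ _) ?_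
        intro s hs
        have hs1 : 1 ≤ s := hs.1
        have hq : 0 < Real.sqrt (1 + δ + s ^ 2) := Real.sqrt_pos.2 (by positivity)
        have hq2 : Real.sqrt (1 + δ + s ^ 2) ≤ 2 * s :=
          Real.sqrt_le_iff.2 ⟨by linarith, by nlinarith⟩
        have hr : 0 ≤ (s + δ) ^ ((p - 2) / 2) := by positivity
        rw [le_div_iff₀ hq]
        nlinarith [mul_le_mul_of_nonneg_left hq2 hr]
      rw [intervalIntegral.integral_const_mul, Gfun_aux_int p hp] at h3
      have e : ∀ x : ℝ, 1 / p * x = 1 / 2 * (2 / p * x) := fun x => by ring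
      rw [e, e]
      linarith
  · have h3 : ∫ s in (0:ℝ)..t, s * (s + δ) ^ ((p - 2) / 2) / Real.sqrt (1 + δ + s ^ 2) ≤
        ∫ s in (0:ℝ)..t, (s + δ) ^ ((p - 2) / 2) := by
      refine intervalIntegral.integral_mono_on ht
        (hf.intervalIntegrable _ _) (hg.intervalIntegrable _ _) ?_
      intro s hs
      have hs0 : 0 ≤ s := hs.1
      have hq : 0 < Real.sqrt (1 + δ + s ^ 2) := Real.sqrt_pos.2 (by positivity)
      have hq2 : s ≤ Real.sqrt (1 + δ + s ^ 2) := Real.le_sqrt_of_sq_le (by linarith)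
      have hr : 0 ≤ (s + δ) ^ ((p - 2) / 2) := by positivity
      rw [div_le_iff₀ hq]
      nlinarith [mul_le_mul_of_nonneg_left hq2 hr]
    rw [Gfun_aux_int p hp] at h3
    have : 0 ≤ 2 / p * (0 + δ) ^ (p / 2) := by positivity
    linarith
end

section
/- Let p > 2 and 0 < δ ≤ 1. Then for every t ≥ 0: ∫₀^t s(s+δ)^{(p−2)/2}/(√(1+δ) + s) ds ≥ (2/p)(t+δ)^{p/2} − (2√(1+δ)/(p−2))(t+δ)^{p/2−1} + (2√(1+δ)/(p−2)) δ^{p/2−1} − (2/p) δ^{p/2}; moreover, since √(1+δ+s²) ≤ √(1+δ) + s for s ≥ 0, the same lower bound holds for 𝒢_δ(t) = ∫₀^t s(s+δ)^{(p−2)/2}/√(1+δ+s²) ds. -/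
/-- for `p > 2`, `0 < δ ≤ 1` and `t ≥ 0`:
`∫₀ᵗ s(s+δ)^{(p−2)/2}/(√(1+δ)+s) ds ≥ (2/p)(t+δ)^{p/2} − (2√(1+δ)/(p−2))(t+δ)^{p/2−1}
  + (2√(1+δ)/(p−2))δ^{p/2−1} − (2/p)δ^{p/2}`;
moreover `√(1+δ+s²) ≤ √(1+δ)+s` for `s ≥ 0`, and the same lower bound holds for `𝒢_δ(t)`. -/
theorem Gfun_lower_bound (p : ℝ) (hp : 2 < p) (δ : ℝ) (hδ0 : 0 < δ) (hδ1 : δ ≤ 1)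
    (t : ℝ) (ht : 0 ≤ t) :
    (2 / p * (t + δ) ^ (p / 2) - 2 * Real.sqrt (1 + δ) / (p - 2) * (t + δ) ^ (p / 2 - 1)
        + 2 * Real.sqrt (1 + δ) / (p - 2) * δ ^ (p / 2 - 1) - 2 / p * δ ^ (p / 2) ≤
      ∫ s in (0:ℝ)..t, s * (s + δ) ^ ((p - 2) / 2) / (Real.sqrt (1 + δ) + s)) ∧
    (∀ s : ℝ, 0 ≤ s → Real.sqrt (1 + δ + s ^ 2) ≤ Real.sqrt (1 + δ) + s) ∧
    (2 / p * (t + δ) ^ (p / 2) - 2 * Real.sqrt (1 + δ) / (p - 2) * (t + δ) ^ (p / 2 - 1)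
        + 2 * Real.sqrt (1 + δ) / (p - 2) * δ ^ (p / 2 - 1) - 2 / p * δ ^ (p / 2) ≤
      Gfun p δ t) := by
  have hc1 : (1:ℝ) ≤ Real.sqrt (1 + δ) := by
    rw [Real.one_le_sqrt]; linarith
  have hsq : Real.sqrt (1 + δ) ^ 2 = 1 + δ := Real.sq_sqrt (by linarith)
  have hS : ∀ s : ℝ, 0 ≤ s → Real.sqrt (1 + δ + s ^ 2) ≤ Real.sqrt (1 + δ) + s := by
    intro s hs
    rw [Real.sqrt_le_left (by positivity)]
    nlinarith [mul_nonneg (Real.sqrt_nonneg (1 + δ)) hs]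
  set c := Real.sqrt (1 + δ) with hc
  have hIcc : Set.uIcc (0:ℝ) t = Set.Icc 0 t := Set.uIcc_of_le ht
  have hcr : ∀ r : ℝ, ContinuousOn (fun s : ℝ => (s + δ) ^ r) (Set.uIcc 0 t) := by
    intro r
    rw [hIcc]
    apply ContinuousOn.rpow_const (by fun_prop)
    intro s hs
    left
    have := hs.1
    positivity
  have hnum : ContinuousOn (fun s : ℝ => s * (s + δ) ^ ((p - 2) / 2)) (Set.uIcc 0 t) :=
    continuousOn_id.mul (hcr _)
  have hi1 : IntervalIntegrable
      (fun s : ℝ => s * (s + δ) ^ ((p - 2) / 2) / (c + s)) MeasureTheory.volume 0 t := by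
    apply ContinuousOn.intervalIntegrable
    apply hnum.div (by fun_prop)
    intro s hs
    rw [hIcc] at hs
    have := hs.1
    positivity
  have hi2 : IntervalIntegrable
      (fun s : ℝ => s * (s + δ) ^ ((p - 2) / 2) / Real.sqrt (1 + δ + s ^ 2))
      MeasureTheory.volume 0 t := by
    apply ContinuousOn.intervalIntegrable
    apply hnum.div (by fun_prop)
    intro s hs
    positivity
  have hi0 : IntervalIntegrable
      (fun s : ℝ => (s + δ) ^ (p / 2 - 1) - c * (s + δ) ^ (p / 2 - 1 - 1))
      MeasureTheory.volume 0 t := by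
    apply ContinuousOn.intervalIntegrable
    exact (hcr _).sub (continuousOn_const.mul (hcr _))
  have hF := intervalIntegral.integral_eq_sub_of_hasDerivAt
    (f := fun s : ℝ => 2 / p * (s + δ) ^ (p / 2) - 2 * c / (p - 2) * (s + δ) ^ (p / 2 - 1))
    (a := 0) (b := t) (fun s hs => by
      rw [hIcc] at hs
      have hs0 := hs.1
      have hne : s + δ ≠ 0 := by positivity
      have hd : HasDerivAt (fun s : ℝ => s + δ) 1 s := (hasDerivAt_id s).add_const δ
      have h1 := (hd.rpow_const (p := p / 2) (Or.inl hne)).const_mul (2 / p)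
      have h2 := (hd.rpow_const (p := p / 2 - 1) (Or.inl hne)).const_mul (2 * c / (p - 2))
      refine (h1.sub h2).congr_deriv ?_
      have hp0 : p ≠ 0 := by linarith
      have hp2 : p - 2 ≠ 0 := by linarith
      have e1 : 2 / p * (1 * (p / 2) * (s + δ) ^ (p / 2 - 1)) = (s + δ) ^ (p / 2 - 1) := by
        field_simp
      have e2 : 2 * c / (p - 2) * (1 * (p / 2 - 1) * (s + δ) ^ (p / 2 - 1 - 1))
          = c * (s + δ) ^ (p / 2 - 1 - 1) := by
        field_simp
      rw [e1, e2]) hi0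
  have hA : 2 / p * (t + δ) ^ (p / 2) - 2 * c / (p - 2) * (t + δ) ^ (p / 2 - 1)
        + 2 * c / (p - 2) * δ ^ (p / 2 - 1) - 2 / p * δ ^ (p / 2) ≤
      ∫ s in (0:ℝ)..t, s * (s + δ) ^ ((p - 2) / 2) / (c + s) := by
    have hm := intervalIntegral.integral_mono_on ht hi0 hi1 (fun s hs => by
      have hs0 := hs.1
      have hpos : 0 < s + δ := by positivity
      have hcs : 0 < c + s := by positivity
      have e : (p - 2) / 2 = p / 2 - 1 := by ring
      rw [e]
      have e3 : (s + δ) ^ (p / 2 - 1) = (s + δ) ^ (p / 2 - 1 - 1) * (s + δ) := by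
        rw [Real.rpow_sub_one hpos.ne' (p / 2 - 1)]
        field_simp
      have hx : 0 < (s + δ) ^ (p / 2 - 1 - 1) := Real.rpow_pos_of_pos hpos _
      rw [e3, le_div_iff₀ hcs]
      have : 0 ≤ (s + δ) ^ (p / 2 - 1 - 1) * (c * (c - δ)) := by
        apply mul_nonneg hx.le
        apply mul_nonneg <;> linarith
      nlinarith)
    rw [hF] at hm
    simp only [zero_add] at hm
    linarith
  refine ⟨hA, hS, hA.trans ?_⟩
  unfold Gfun
  apply intervalIntegral.integral_mono_on ht hi1 hi2
  intro s hs
  have hs0 := hs.1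
  have h := hS s hs0
  have : 0 < Real.sqrt (1 + δ + s ^ 2) := by positivity
  gcongr
end

section
/- Let p ≥ 2 and 0 < δ < 1. Then there exists a constant c_p, depending only on p, such that for every s > 1 + δ: [𝒢_δ'(s − 1 − δ)]² = g_{1+δ}(s − 1 − δ) · (s − 1)^{p−2} ≤ (c_p/δ²) · g_{1+δ}((s² − 1 − δ)_+) · (s − 1)_+^p / s², where 𝒢_δ'(t) = t(t+δ)^{(p−2)/2}/√(1+δ+t²). -/
/-- `gk k s = s²/(k+s²)`. -/
noncomputable def gk (k s : ℝ) : ℝ := s ^ 2 / (k + s ^ 2)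

/-- `Gfun' p δ t = t(t+δ)^{(p−2)/2}/√(1+δ+t²)`, the derivative of
`𝒢_δ(t) = ∫₀ᵗ s(s+δ)^{(p−2)/2}/√(1+δ+s²) ds`. -/
noncomputable def Gfun' (p δ t : ℝ) : ℝ :=
  t * (t + δ) ^ ((p - 2) / 2) / Real.sqrt (1 + δ + t ^ 2)

/-- for `p ≥ 2` there is `c_p`, depending only on `p`, such that for every
`δ ∈ (0,1)` and every `s > 1+δ`:
`[𝒢_δ'(s−1−δ)]² = g_{1+δ}(s−1−δ)·(s−1)^{p−2} ≤ (c_p/δ²)·g_{1+δ}((s²−1−δ)₊)·(s−1)₊^p/s²`. -/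
theorem Gfun_derivative_estimate (p : ℝ) (hp : 2 ≤ p) :
    ∃ c : ℝ, 0 < c ∧ ∀ δ : ℝ, 0 < δ → δ < 1 → ∀ s : ℝ, 1 + δ < s →
      (Gfun' p δ (s - 1 - δ)) ^ 2 = gk (1 + δ) (s - 1 - δ) * (s - 1) ^ (p - 2) ∧
      gk (1 + δ) (s - 1 - δ) * (s - 1) ^ (p - 2) ≤
        c / δ ^ 2 * (gk (1 + δ) (max (s ^ 2 - 1 - δ) 0) * (max (s - 1) 0) ^ p / s ^ 2) := by
  refine ⟨4, by norm_num, fun δ hδ hδ1 s hs => ?_⟩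
  have hs1 : 0 < s - 1 := by linarith
  have hs0 : 0 < s := by linarith
  constructor
  · unfold Gfun' gk
    have e : s - 1 - δ + δ = s - 1 := by ring
    have hpow : ((s - 1) ^ ((p - 2) / 2)) ^ 2 = (s - 1) ^ (p - 2) := by
      rw [← Real.rpow_natCast, ← Real.rpow_mul hs1.le]
      congr 1
      push_cast
      ring
    rw [e, div_pow, mul_pow, hpow, Real.sq_sqrt (by positivity)]
    ring
  · have hT : 0 ≤ s ^ 2 - 1 - δ := by nlinarith
    rw [max_eq_left hT, max_eq_left hs1.le]
    have hR : (s - 1) ^ p = (s - 1) ^ (p - 2) * (s - 1) ^ 2 := by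
      rw [← Real.rpow_natCast, ← Real.rpow_add hs1]
      congr 1
      push_cast
      ring
    have hR0 : 0 ≤ (s - 1) ^ (p - 2) := Real.rpow_nonneg hs1.le _
    have hg : gk (1 + δ) (s - 1 - δ) ≤ gk (1 + δ) (s ^ 2 - 1 - δ) := by
      unfold gk
      have h2 : (s - 1 - δ) ^ 2 ≤ (s ^ 2 - 1 - δ) ^ 2 :=
        pow_le_pow_left₀ (by linarith) (by nlinarith) 2
      rw [div_le_div_iff₀ (by positivity) (by positivity)]
      nlinarith
    have hB : 0 ≤ gk (1 + δ) (s ^ 2 - 1 - δ) := by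
      unfold gk
      positivity
    have hk : 1 ≤ 4 / δ ^ 2 * ((s - 1) ^ 2 / s ^ 2) := by
      have h1 : δ * s ≤ 2 * (s - 1) := by nlinarith
      have h2 : (δ * s) ^ 2 ≤ (2 * (s - 1)) ^ 2 :=
        pow_le_pow_left₀ (by positivity) h1 2
      rw [div_mul_div_comm, le_div_iff₀ (by positivity)]
      nlinarith
    rw [hR]
    calc _ ≤ gk (1 + δ) (s ^ 2 - 1 - δ) * (s - 1) ^ (p - 2) :=
          mul_le_mul_of_nonneg_right hg hR0
      _ ≤ (gk (1 + δ) (s ^ 2 - 1 - δ) * (s - 1) ^ (p - 2)) *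
            (4 / δ ^ 2 * ((s - 1) ^ 2 / s ^ 2)) :=
          le_mul_of_one_le_right (mul_nonneg hB hR0) hk
      _ = _ := by ring
end
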